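/- arXiv:1708.03057 — 4 statements merged into one kernel-verified Lean document; each statement's English description precedes it below -/
import Mathlib

section
/- Let G be a group and V a normal abelian subgroup of G. Suppose that every strictly increasing chain H_0 < H_1 < ... < H_l of subgroups of the quotient G/V satisfies l ≤ L. Then the c-dimension of G is at most 2L. -/
/-!
For subgroups `A`, `B` of `G` with the same image in `G ⧸ V`, the centralizers of `A` and `B` meet
the abelian group `V` in the same subgroup. Since a centralizer `C` is the centralizer of `C_G(C)`,
the image of `C_G(C)` in `G ⧸ V` therefore determines `C ⊓ V`; together with the image of `C` this
pins down `C` among comparable centralizers. So `C ↦ (image of C, image of C_G(C))` is strictly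
monotone, with the order reversed in the second factor, and a product of two orders has Krull
dimension at most the sum of theirs.
-/

open Order OrderDual

section KrullDim

variable {α β : Type*} [Preorder α] [Preorder β]

theorem krullDim_le_natCast_iff_forall_strictMono {n : ℕ} :
    krullDim α ≤ n ↔ ∀ (l : ℕ) (f : Fin (l + 1) → α), StrictMono f → l ≤ n := by
  refine ⟨fun h l f hf => ?_, fun h => iSup_le fun p => ?_⟩
  · exact_mod_cast (LTSeries.mk l f hf).length_le_krullDim.trans h
  · exact_mod_cast h p.length p p.strictMono

theorem height_le_of_add_one_le {f : α → ℕ∞} (hf : ∀ ⦃a b⦄, a < b → f a + 1 ≤ f b) (a : α) :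
    height a ≤ f a := by
  refine height_le fun p hp => ?_
  have index_le (i : Fin (p.length + 1)) : ((i : ℕ) : ℕ∞) ≤ f (p i) := by
    induction i using Fin.induction with
    | zero => simp
    | succ i ih =>
      calc ((i.succ : ℕ) : ℕ∞) = (i.castSucc : ℕ) + 1 := by simp
        _ ≤ f (p i.castSucc) + 1 := by gcongr
        _ ≤ f (p i.succ) := hf (p.step i)
  exact hp ▸ index_le (Fin.last p.length)

theorem height_prod_le (x : α × β) : height x ≤ height x.1 + height x.2 := by
  refine height_le_of_add_one_le (f := fun x : α × β => height x.1 + height x.2)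
    (fun a b hab => ?_) x
  rcases Prod.lt_iff.1 hab with ⟨hfst, hsnd⟩ | ⟨hfst, hsnd⟩
  · calc height a.1 + height a.2 + 1 = height a.1 + 1 + height a.2 := add_right_comm ..
      _ ≤ height b.1 + height b.2 := add_le_add (height_add_one_le hfst) (height_mono hsnd)
  · calc height a.1 + height a.2 + 1 = height a.1 + (height a.2 + 1) := add_assoc ..
      _ ≤ height b.1 + height b.2 := add_le_add (height_mono hfst) (height_add_one_le hsnd)

theorem krullDim_prod_le : krullDim (α × β) ≤ krullDim α + krullDim β := by
  rw [krullDim_eq_iSup_height]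
  refine iSup_le fun x => ?_
  calc (height x : WithBot ℕ∞) ≤ height x.1 + height x.2 := by exact_mod_cast height_prod_le x
    _ ≤ krullDim α + krullDim β := add_le_add (height_le_krullDim _) (height_le_krullDim _)

end KrullDim

section Centralizer

variable {G : Type*} [Group G]

theorem centralizer_centralizer_of_mem_range {C : Subgroup G}
    (hC : C ∈ Set.range (Subgroup.centralizer : Set G → Subgroup G)) :
    Subgroup.centralizer (Subgroup.centralizer (C : Set G) : Set G) = C := by
  obtain ⟨S, rfl⟩ := hC
  exact SetLike.coe_injective (Set.centralizer_centralizer_centralizer S)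

theorem centralizer_inf_le_centralizer_of_le_sup {V A B : Subgroup G} [IsMulCommutative V]
    (h : A ≤ B ⊔ V) :
    Subgroup.centralizer (B : Set G) ⊓ V ≤ Subgroup.centralizer (A : Set G) := by
  have hB : B ≤ Subgroup.centralizer (Subgroup.centralizer (B : Set G) ⊓ V : Subgroup G) :=
    Subgroup.le_centralizer_iff.1 inf_le_left
  have hV : V ≤ Subgroup.centralizer (Subgroup.centralizer (B : Set G) ⊓ V : Subgroup G) :=
    Subgroup.le_centralizer_iff.1 (inf_le_right.trans V.le_centralizer)
  exact Subgroup.le_centralizer_iff.1 (h.trans (sup_le hB hV))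

variable (V : Subgroup G) [V.Normal] [IsMulCommutative V]

theorem comap_subtype_centralizer_le_of_map_mk'_le {A B : Subgroup G}
    (h : A.map (QuotientGroup.mk' V) ≤ B.map (QuotientGroup.mk' V)) :
    (Subgroup.centralizer (B : Set G)).comap V.subtype ≤
      (Subgroup.centralizer (A : Set G)).comap V.subtype := by
  rw [Subgroup.map_le_map_iff, QuotientGroup.ker_mk'] at h
  exact fun v hv => centralizer_inf_le_centralizer_of_le_sup h ⟨hv, v.2⟩

theorem strictMono_map_mk'_prod_map_mk'_centralizer :
    StrictMono fun C : Set.range (Subgroup.centralizer : Set G → Subgroup G) =>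
      (C.1.map (QuotientGroup.mk' V),
        toDual ((Subgroup.centralizer (C : Set G)).map (QuotientGroup.mk' V))) := by
  intro C D hCD
  refine lt_of_le_not_ge
    ⟨Subgroup.map_mono hCD.le, Subgroup.map_mono (Subgroup.centralizer_le hCD.le)⟩ ?_
  rintro ⟨hmap, hmap_centralizer⟩
  have hcomap := comap_subtype_centralizer_le_of_map_mk'_le V hmap_centralizer
  rw [centralizer_centralizer_of_mem_range C.2, centralizer_centralizer_of_mem_range D.2] at hcomap
  exact (QuotientGroup.strictMono_comap_prod_map V hCD).not_ge ⟨hcomap, hmap⟩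

/-- The c-dimension of `G`: the supremum of the lengths `m` of strictly increasing chains
`C_G(S_0) < ... < C_G(S_m)` of centralizers, with value `⊤` if these lengths are unbounded. -/
noncomputable def cDimension (G : Type*) [Group G] : WithBot ℕ∞ :=
  krullDim (Set.range (Subgroup.centralizer : Set G → Subgroup G))

theorem cDimension_le_two_mul_krullDim_subgroup_quotient :
    cDimension G ≤ 2 * krullDim (Subgroup (G ⧸ V)) :=
  calc cDimension G ≤ krullDim (Subgroup (G ⧸ V) × (Subgroup (G ⧸ V))ᵒᵈ) :=
        krullDim_le_of_strictMono _ (strictMono_map_mk'_prod_map_mk'_centralizer V)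
    _ ≤ krullDim (Subgroup (G ⧸ V)) + krullDim (Subgroup (G ⧸ V))ᵒᵈ := krullDim_prod_le
    _ = 2 * krullDim (Subgroup (G ⧸ V)) := by rw [krullDim_orderDual, two_mul]

theorem cDimension_le_natCast_iff {n : ℕ} :
    cDimension G ≤ n ↔ ∀ (m : ℕ) (S : Fin (m + 1) → Set G),
      StrictMono (fun i => Subgroup.centralizer (S i)) → m ≤ n := by
  refine krullDim_le_natCast_iff_forall_strictMono.trans
    (forall_congr' fun m => ⟨fun h S hS => ?_, fun h C hC => ?_⟩)
  · exact h (fun i => ⟨Subgroup.centralizer (S i), Set.mem_range_self _⟩) hS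
  · choose S hS using fun i => (C i).2
    exact h S fun i j hij => by simpa only [hS, Subtype.coe_lt_coe] using hC hij

end Centralizer

/-- If `V` is a normal abelian subgroup of `G` and every strictly increasing
chain `H_0 < H_1 < ... < H_l` of subgroups of `G ⧸ V` satisfies `l ≤ L`, then the
c-dimension of `G` is at most `2 * L`: every strictly increasing chain
`C_G(S_0) < ... < C_G(S_m)` of centralizers of subsets of `G` satisfies `m ≤ 2 * L`. -/
theorem cdim_le_of_chains_in_quotient_by_normal_abelian
    (G : Type*) [Group G] (V : Subgroup G) [V.Normal]
    (hV : ∀ x ∈ V, ∀ y ∈ V, x * y = y * x) (L : ℕ)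
    (hchain : ∀ (l : ℕ) (H : Fin (l + 1) → Subgroup (G ⧸ V)), StrictMono H → l ≤ L) :
    ∀ (m : ℕ) (S : Fin (m + 1) → Set G),
      StrictMono (fun i => Subgroup.centralizer (S i)) → m ≤ 2 * L := by
  have : IsMulCommutative V :=
    Subgroup.le_centralizer_iff_isMulCommutative.1 fun x hx y hy => hV y hy x hx
  have hdim : krullDim (Subgroup (G ⧸ V)) ≤ L :=
    krullDim_le_natCast_iff_forall_strictMono.2 hchain
  refine cDimension_le_natCast_iff.1 ?_
  calc cDimension G ≤ 2 * krullDim (Subgroup (G ⧸ V)) :=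
        cDimension_le_two_mul_krullDim_subgroup_quotient V
    _ ≤ 2 * L := by gcongr
    _ = (2 * L : ℕ) := by norm_cast
end

section
/- Let p be a prime and let E be an elementary abelian p-group of order p^n (a finite commutative group of cardinality p^n in which every element x satisfies x^p = 1). Suppose E acts faithfully by automorphisms on a finite nilpotent group Q whose order is coprime to p. Then there exists a strictly decreasing chain of subgroups E = E_0 > E_1 > E_2 > ... > E_n = 1 such that the fixed-point subgroups satisfy C_Q(E_0) < C_Q(E_1) < ... < C_Q(E_n) (a strictly increasing chain). -/
/-!
It suffices to find, for every nontrivial action of an elementary abelian `p`-group `E` on `Q`, a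
subgroup `M` of index `p` with `C_Q(E) < C_Q(M)`; the chain then continues inside `M`.

Take `M` maximal with `C_Q(M) ≠ C_Q(E)`. Then `A = E ⧸ M` acts nontrivially on `G = C_Q(M)`, and by
maximality each single `c ≠ 1` in `A` already has `C_G(c) = C_G(A)`. Such an `A` is cyclic, hence of
order `p`. Indeed, if `a` and `b ≠ 1` are in `A` with `a ∉ ⟨b⟩` and `G` is abelian, then with
`N_c(x) = ∏_{j < p} c ^ j • x`, which is fixed by `c`,
`∏_{i < p} N_{a b ^ i}(x) = x ^ p * ∏_{0 < j < p} a ^ j • N_{b ^ j}(x)`,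
and every factor except `x ^ p` is fixed by `A`, so `A` fixes `x ^ p` and therefore `x`. For
nilpotent `G` one factors out the center: once `A` centralizes `Z(G)`, an element of `A` fixing a
coset of `Z(G)` fixes each of its members.

Coprimality enters through the injectivity of `x ↦ x ^ p`, which passes to subgroups and to the
quotient by the center: if `x ^ p` and `y ^ p` agree modulo the center, then `x` and `y` commute.
-/

/-- The subgroup of elements of `Q` fixed by every element of a subgroup `F` of `E`,
where `E` acts on `Q` by automorphisms. -/
def fixedSubgroup {E Q : Type*} [Group E] [Group Q] [MulDistribMulAction E Q]
    (F : Subgroup E) : Subgroup Q where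
  carrier := {q : Q | ∀ e ∈ F, e • q = q}
  one_mem' := fun e _ => smul_one e
  mul_mem' := by
    intro a b ha hb e he
    rw [smul_mul', ha e he, hb e he]
  inv_mem' := by
    intro a ha e he
    rw [smul_inv', ha e he]

open MulAction

section Norm

/-- The norm `x * c • x * ⋯ * c ^ (p - 1) • x` of `x` along `c`. It is meant for `c ^ p = 1`, but
`p` need not be the order of `c`. -/
def powNorm {M G : Type*} [Monoid M] [CommMonoid G] [MulDistribMulAction M G]
    (p : ℕ) (c : M) (x : G) : G :=
  ∏ j ∈ Finset.range p, c ^ j • x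

theorem smul_powNorm {M G : Type*} [Monoid M] [CancelCommMonoid G] [MulDistribMulAction M G]
    {p : ℕ} {c : M} (hc : c ^ p = 1) (x : G) : c • powNorm p c x = powNorm p c x := by
  refine mul_right_cancel (b := c ^ 0 • x) ?_
  calc c • powNorm p c x * c ^ 0 • x
      = (∏ j ∈ Finset.range p, c ^ (j + 1) • x) * c ^ 0 • x := by
        simp only [powNorm, Finset.smul_prod', smul_smul, ← pow_succ']
    _ = powNorm p c x * c ^ p • x := by
        rw [← Finset.prod_range_succ' (fun j => c ^ j • x), Finset.prod_range_succ, powNorm]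
    _ = powNorm p c x * c ^ 0 • x := by rw [hc, pow_zero]

theorem prod_powNorm_mul_pow {M G : Type*} [CommMonoid M] [CommMonoid G] [MulDistribMulAction M G]
    {p : ℕ} (hp : 0 < p) (a b : M) (x : G) :
    ∏ i ∈ Finset.range p, powNorm p (a * b ^ i) x =
      x ^ p * ∏ j ∈ Finset.Ico 1 p, a ^ j • powNorm p (b ^ j) x := by
  calc ∏ i ∈ Finset.range p, powNorm p (a * b ^ i) x
      = ∏ j ∈ Finset.range p, ∏ i ∈ Finset.range p, (a * b ^ i) ^ j • x := Finset.prod_comm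
    _ = ∏ j ∈ Finset.range p, a ^ j • powNorm p (b ^ j) x := by
        simp only [powNorm, Finset.smul_prod', smul_smul, mul_pow, pow_right_comm]
    _ = x ^ p * ∏ j ∈ Finset.Ico 1 p, a ^ j • powNorm p (b ^ j) x := by
        rw [Finset.prod_range_eq_mul_Ico _ hp]
        simp [powNorm]

end Norm

section UniqueRoots

variable {G : Type*} [Group G] {p : ℕ}

theorem commute_of_pow_left (hG : Function.Injective fun x : G => x ^ p) {x y : G}
    (h : Commute (x ^ p) y) : Commute x y := by
  have hconj : (y * x * y⁻¹) ^ p = x ^ p := by rw [conj_pow, h.symm.mul_inv_cancel]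
  exact (mul_inv_eq_iff_eq_mul.1 (hG hconj)).symm

theorem pow_injective_quotient_center (hG : Function.Injective fun x : G => x ^ p) :
    Function.Injective fun x : G ⧸ Subgroup.center G => x ^ p := by
  rintro ⟨x⟩ ⟨y⟩ hxy
  have hz : (x ^ p)⁻¹ * y ^ p ∈ Subgroup.center G := QuotientGroup.eq.1 hxy
  have hpow : Commute (y ^ p) (x ^ p) := by
    have := (Commute.refl (x ^ p)).mul_right (Subgroup.mem_center_iff.1 hz (x ^ p))
    rw [mul_inv_cancel_left] at this
    exact this.symm
  have hcomm : Commute x y := commute_of_pow_left hG (commute_of_pow_left hG hpow).symm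
  refine QuotientGroup.eq.2 (Subgroup.mem_center_iff.2 fun g => ?_)
  refine (commute_of_pow_left hG ?_).symm
  rw [hcomm.inv_left.mul_pow, inv_pow]
  exact (Subgroup.mem_center_iff.1 hz g).symm

end UniqueRoots

section Characteristic

variable {A G : Type*} [Group A] [Group G] [MulDistribMulAction A G]
  (H : Subgroup G) [H.Characteristic]

/-- The restriction of an action by automorphisms to a characteristic subgroup. It is not a global
instance, as it would compete with the conjugation actions on normal subgroups. -/
abbrev characteristicAction : MulDistribMulAction A H :=
  MulDistribMulAction.compHom H ((MulAut.characteristic H).comp (MulDistribMulAction.toMulAut A G))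

instance quotientAction_of_characteristic : QuotientAction A H where
  inv_mul_mem a x y hxy := by
    rw [← smul_inv', ← smul_mul']
    exact Subgroup.characteristic_iff_le_comap.1 ‹_› (MulDistribMulAction.toMulAut A G a) hxy

/-- The action by automorphisms induced on the quotient by a characteristic subgroup. -/
abbrev characteristicQuotientAction : MulDistribMulAction A (G ⧸ H) where
  smul_mul a := by
    rintro ⟨x⟩ ⟨y⟩
    exact congrArg QuotientGroup.mk (smul_mul' a x y)
  smul_one a := congrArg QuotientGroup.mk (smul_one a)

end Characteristic

section NonCyclic

theorem exists_ne_one_notMem_zpowers {A : Type*} [Group A] (h : ¬IsCyclic A) :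
    ∃ a b : A, b ≠ 1 ∧ a ∉ Subgroup.zpowers b := by
  have hA : Nontrivial A := not_subsingleton_iff_nontrivial.1 fun _ => h inferInstance
  obtain ⟨b, hb⟩ := exists_ne (1 : A)
  by_contra! hgen
  exact h ⟨b, fun a => hgen a b hb⟩

theorem smul_eq_self_of_smul_inv_mul {M G : Type*} [Monoid M] [Group G] [MulDistribMulAction M G]
    {p : ℕ} (hG : ∀ x : G, x ^ p = 1 → x = 1) {c : M} (hc : c ^ p = 1) {x : G}
    (h : c • (x⁻¹ * c • x) = x⁻¹ * c • x) : c • x = x := by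
  set z := x⁻¹ * c • x
  have smul_x : c • x = x * z := (mul_inv_cancel_left x (c • x)).symm
  have pow_smul_x (j : ℕ) : c ^ j • x = x * z ^ j := by
    induction j with
    | zero => simp
    | succ j ih =>
      rw [pow_succ', mul_smul, ih, smul_mul', smul_pow', h, smul_x, mul_assoc, ← pow_succ']
  have hz : z ^ p = 1 := by simpa [hc] using pow_smul_x p
  rw [smul_x, hG z hz, mul_one]

variable {A : Type*} [CommGroup A] {p : ℕ}

theorem smul_eq_self_of_not_isCyclic_of_comm {G : Type*} [CommGroup G] [MulDistribMulAction A G]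
    (hp : p.Prime) (hA : ∀ a : A, a ^ p = 1) (hcyc : ¬IsCyclic A)
    (hG : Function.Injective fun x : G => x ^ p)
    (hfix : ∀ c : A, c ≠ 1 → fixedBy G c ⊆ fixedPoints A G) (e : A) (x : G) : e • x = x := by
  obtain ⟨a, b, hb, ha⟩ := exists_ne_one_notMem_zpowers hcyc
  have smul_norm {c : A} (hc : c ≠ 1) : e • powNorm p c x = powNorm p c x :=
    hfix c hc (smul_powNorm (hA c) x) e
  have hab (i : ℕ) : a * b ^ i ≠ 1 := fun h =>
    ha (eq_inv_of_mul_eq_one_left h ▸ inv_mem (Subgroup.npow_mem_zpowers b i))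
  have hbj {j : ℕ} (hj : j ∈ Finset.Ico 1 p) : b ^ j ≠ 1 := by
    have : Fact p.Prime := ⟨hp⟩
    obtain ⟨hj1, hjp⟩ := Finset.mem_Ico.1 hj
    exact pow_ne_one_of_lt_orderOf (Nat.one_le_iff_ne_zero.1 hj1)
      (by rwa [orderOf_eq_prime (hA b) hb])
  have hleft : e • ∏ i ∈ Finset.range p, powNorm p (a * b ^ i) x =
      ∏ i ∈ Finset.range p, powNorm p (a * b ^ i) x := by
    rw [Finset.smul_prod']
    exact Finset.prod_congr rfl fun i _ => smul_norm (hab i)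
  have hright : e • ∏ j ∈ Finset.Ico 1 p, a ^ j • powNorm p (b ^ j) x =
      ∏ j ∈ Finset.Ico 1 p, a ^ j • powNorm p (b ^ j) x := by
    rw [Finset.smul_prod']
    exact Finset.prod_congr rfl fun j hj => by rw [smul_comm, smul_norm (hbj hj)]
  rw [prod_powNorm_mul_pow hp.pos, smul_mul', hright, smul_pow'] at hleft
  exact hG (mul_right_cancel hleft)

open scoped IsMulCommutative in
theorem smul_center_eq_self_of_not_isCyclic {G : Type*} [Group G] [MulDistribMulAction A G]
    (hp : p.Prime) (hA : ∀ a : A, a ^ p = 1) (hcyc : ¬IsCyclic A)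
    (hG : Function.Injective fun x : G => x ^ p)
    (hfix : ∀ c : A, c ≠ 1 → fixedBy G c ⊆ fixedPoints A G)
    (e : A) {z : G} (hz : z ∈ Subgroup.center G) : e • z = z := by
  let := characteristicAction (A := A) (Subgroup.center G)
  exact congrArg Subtype.val (smul_eq_self_of_not_isCyclic_of_comm hp hA hcyc
    (fun x y hxy => Subtype.ext (hG (congrArg Subtype.val hxy)))
    (fun c hc x hx a => Subtype.ext (hfix c hc (congrArg Subtype.val hx) a)) e
    (⟨z, hz⟩ : Subgroup.center G))

theorem smul_eq_self_of_not_isCyclic {G : Type*} [Group G] [Group.IsNilpotent G]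
    [MulDistribMulAction A G] (hp : p.Prime) (hA : ∀ a : A, a ^ p = 1) (hcyc : ¬IsCyclic A)
    (hG : Function.Injective fun x : G => x ^ p)
    (hfix : ∀ c : A, c ≠ 1 → fixedBy G c ⊆ fixedPoints A G) (e : A) (x : G) : e • x = x := by
  revert ‹MulDistribMulAction A G› hG hfix e x
  apply @Group.nilpotent_center_quotient_ind _ G _ _ <;> clear! G
  · intro G _ _ _ _ _ _ _
    exact Subsingleton.elim _ _
  · intro G _ _ ih _ hG hfix e x
    let := characteristicQuotientAction (A := A) (Subgroup.center G)
    have hG1 (y : G) (hy : y ^ p = 1) : y = 1 := hG (hy.trans (one_pow p).symm)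
    have lift {c : A} {y : G} (h : c • (y : G ⧸ Subgroup.center G) = y) : c • y = y :=
      smul_eq_self_of_smul_inv_mul hG1 (hA c)
        (smul_center_eq_self_of_not_isCyclic hp hA hcyc hG hfix c (QuotientGroup.eq.1 h.symm))
    refine lift (ih (pow_injective_quotient_center hG) ?_ e x)
    rintro c hc ⟨y⟩ hy a
    exact congrArg QuotientGroup.mk (hfix c hc (lift hy) a)

end NonCyclic

section FixedSubgroup

variable {E Q : Type*} [Group Q]

theorem mem_fixedSubgroup_iff [Group E] [MulDistribMulAction E Q] {F : Subgroup E} {x : Q} :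
    x ∈ fixedSubgroup F ↔ F ≤ stabilizer E x :=
  Iff.rfl

theorem fixedSubgroup_antitone [Group E] [MulDistribMulAction E Q] :
    Antitone (fixedSubgroup : Subgroup E → Subgroup Q) :=
  fun _ _ h _ hx => mem_fixedSubgroup_iff.2 (h.trans (mem_fixedSubgroup_iff.1 hx))

theorem fixedSubgroup_map_subtype [Group E] [MulDistribMulAction E Q] {M : Subgroup E}
    (F : Subgroup M) : (fixedSubgroup (F.map M.subtype) : Subgroup Q) = fixedSubgroup F := by
  ext x
  exact Subgroup.map_le_iff_le_comap (f := M.subtype) (H := stabilizer E x) (K := F)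

theorem exists_fixedSubgroup_chain_cons [Group E] [MulDistribMulAction E Q] {n : ℕ}
    {M : Subgroup E} (hlt : (fixedSubgroup (⊤ : Subgroup E) : Subgroup Q) < fixedSubgroup M)
    {c : Fin (n + 1) → Subgroup M} (hzero : c 0 = ⊤) (hlast : c (Fin.last n) = ⊥)
    (hanti : StrictAnti c) (hmono : StrictMono fun i => (fixedSubgroup (c i) : Subgroup Q)) :
    ∃ d : Fin (n + 2) → Subgroup E, d 0 = ⊤ ∧ d (Fin.last (n + 1)) = ⊥ ∧ StrictAnti d ∧
      StrictMono fun i => (fixedSubgroup (d i) : Subgroup Q) := by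
  have hhead : (c 0).map M.subtype = M := by
    rw [hzero, ← MonoidHom.range_eq_map, M.range_subtype]
  have hM : M < ⊤ := lt_top_iff_ne_top.2 (by rintro rfl; exact hlt.false)
  have hmap : StrictAnti fun i => (c i).map M.subtype := fun i j h =>
    (Subgroup.map_lt_map_iff_of_injective M.subtype_injective).2 (hanti h)
  have hfix : StrictMono (Matrix.vecCons (fixedSubgroup (⊤ : Subgroup E) : Subgroup Q)
      fun i => fixedSubgroup (c i)) :=
    hmono.vecCons (by rwa [← fixedSubgroup_map_subtype (c 0), hhead])
  refine ⟨Matrix.vecCons ⊤ fun i => (c i).map M.subtype, rfl, ?_,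
    hmap.vecCons (by rwa [hhead]), ?_⟩
  · rw [← Fin.succ_last, Matrix.cons_val_succ, hlast, Subgroup.map_bot]
  · convert hfix using 2 with i
    cases i using Fin.cases with
    | zero => rfl
    | succ i => exact fixedSubgroup_map_subtype (c i)

theorem fixedSubgroup_bot_ne_top [Group E] [Nontrivial E] [MulDistribMulAction E Q]
    (hfaithful : ∀ e : E, (∀ q : Q, e • q = q) → e = 1) :
    (fixedSubgroup (⊥ : Subgroup E) : Subgroup Q) ≠ fixedSubgroup (⊤ : Subgroup E) := by
  intro h
  obtain ⟨e, he⟩ := exists_ne (1 : E)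
  refine he (hfaithful e fun q => ?_)
  have hq : q ∈ fixedSubgroup (⊥ : Subgroup E) := mem_fixedSubgroup_iff.2 bot_le
  exact (h ▸ hq : q ∈ fixedSubgroup (⊤ : Subgroup E)) e trivial

variable [CommGroup E] [MulDistribMulAction E Q]

theorem fixedBy_quotient_subset_fixedPoints {M : Subgroup E}
    (hM : Maximal (fun F : Subgroup E =>
      (fixedSubgroup F : Subgroup Q) ≠ fixedSubgroup (⊤ : Subgroup E)) M)
    {c : E ⧸ M} (hc : c ≠ 1) :
    fixedBy (FixedPoints.subgroup M Q) c ⊆ fixedPoints (E ⧸ M) (FixedPoints.subgroup M Q) := by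
  obtain ⟨c, rfl⟩ := QuotientGroup.mk_surjective c
  have hcM : c ∉ M := fun h => hc ((QuotientGroup.eq_one_iff c).2 h)
  have hsup : (fixedSubgroup (M ⊔ Subgroup.zpowers c) : Subgroup Q) =
      fixedSubgroup (⊤ : Subgroup E) := by
    by_contra hne
    exact hcM (hM.2 hne le_sup_left (Subgroup.mem_sup_right (Subgroup.mem_zpowers c)))
  rintro ⟨x, hxM⟩ hcx ⟨e⟩
  have hx : x ∈ fixedSubgroup (M ⊔ Subgroup.zpowers c) :=
    mem_fixedSubgroup_iff.2 (sup_le (fun f hf => hxM ⟨f, hf⟩)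
      (Subgroup.zpowers_le.2 (congrArg Subtype.val hcx)))
  exact Subtype.ext ((hsup ▸ hx : x ∈ fixedSubgroup (⊤ : Subgroup E)) e trivial)

theorem index_eq_prime_of_maximal [Group.IsNilpotent Q] {p : ℕ} (hp : p.Prime)
    (hE : ∀ e : E, e ^ p = 1) (hQ : Function.Injective fun x : Q => x ^ p) {M : Subgroup E}
    (hM : Maximal (fun F : Subgroup E =>
      (fixedSubgroup F : Subgroup Q) ≠ fixedSubgroup (⊤ : Subgroup E)) M) :
    M.index = p := by
  have hexp : ∀ c : E ⧸ M, c ^ p = 1 := by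
    rintro ⟨e⟩
    exact congrArg QuotientGroup.mk (hE e)
  have hcyc : IsCyclic (E ⧸ M) := by
    by_contra hcyc
    have htriv := smul_eq_self_of_not_isCyclic (G := FixedPoints.subgroup M Q) hp hexp hcyc
      (fun x y hxy => Subtype.ext (hQ (congrArg Subtype.val hxy)))
      fun c hc => fixedBy_quotient_subset_fixedPoints hM hc
    refine hM.1 (le_antisymm (fun x hx e _ => ?_) (fixedSubgroup_antitone le_top))
    exact congrArg Subtype.val (htriv e ⟨x, fun f => hx f f.2⟩)
  have hne : M.index ≠ 1 := fun h => hM.1 (by rw [Subgroup.index_eq_one.1 h])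
  have hdvd : M.index ∣ p := by
    rw [Subgroup.index_eq_card, ← IsCyclic.exponent_eq_card]
    exact Monoid.exponent_dvd_of_forall_pow_eq_one hexp
  exact (hp.eq_one_or_self_of_dvd _ hdvd).resolve_left hne

theorem exists_index_eq_prime_fixedSubgroup_lt [Finite E] [Nontrivial E] [Group.IsNilpotent Q]
    {p : ℕ} (hp : p.Prime) (hE : ∀ e : E, e ^ p = 1)
    (hQ : Function.Injective fun x : Q => x ^ p)
    (hfaithful : ∀ e : E, (∀ q : Q, e • q = q) → e = 1) :
    ∃ M : Subgroup E, M.index = p ∧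
      (fixedSubgroup (⊤ : Subgroup E) : Subgroup Q) < fixedSubgroup M := by
  obtain ⟨M, hM⟩ := (Set.toFinite {F : Subgroup E |
    (fixedSubgroup F : Subgroup Q) ≠ fixedSubgroup (⊤ : Subgroup E)}).exists_maximal
    ⟨⊥, fixedSubgroup_bot_ne_top hfaithful⟩
  exact ⟨M, index_eq_prime_of_maximal hp hE hQ hM,
    (fixedSubgroup_antitone le_top).lt_of_ne hM.1.symm⟩

end FixedSubgroup

theorem khukhro_lemma_general {p n : ℕ} (hp : p.Prime) {E Q : Type*}
    [CommGroup E] (hcard : Nat.card E = p ^ n) (hexp : ∀ x : E, x ^ p = 1)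
    [Group Q] [Group.IsNilpotent Q] (hQ : Function.Injective fun x : Q => x ^ p)
    [MulDistribMulAction E Q] (hfaithful : ∀ e : E, (∀ q : Q, e • q = q) → e = 1) :
    ∃ c : Fin (n + 1) → Subgroup E,
      c 0 = ⊤ ∧ c (Fin.last n) = ⊥ ∧ StrictAnti c ∧
      StrictMono (fun i => fixedSubgroup (c i) : Fin (n + 1) → Subgroup Q) := by
  induction n generalizing E with
  | zero =>
    have : Subsingleton E := (Nat.card_eq_one_iff_unique.1 hcard).1
    have : Subsingleton (Fin (0 + 1)) := inferInstanceAs (Subsingleton (Fin 1))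
    exact ⟨fun _ => ⊤, rfl, Subsingleton.elim _ _, Subsingleton.strictAnti _,
      Subsingleton.strictMono _⟩
  | succ n ih =>
    have : Finite E := Nat.finite_of_card_ne_zero (hcard ▸ pow_ne_zero _ hp.ne_zero)
    have : Nontrivial E :=
      Finite.one_lt_card_iff_nontrivial.1 (hcard ▸ Nat.one_lt_pow n.succ_ne_zero hp.one_lt)
    obtain ⟨M, hindex, hlt⟩ := exists_index_eq_prime_fixedSubgroup_lt hp hexp hQ hfaithful
    have hM : Nat.card M = p ^ n :=
      Nat.eq_of_mul_eq_mul_right hp.pos (by rw [← pow_succ, ← hcard, ← M.card_mul_index, hindex])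
    obtain ⟨c, hzero, hlast, hanti, hmono⟩ := ih hM (fun x => Subtype.ext (hexp x))
      fun e he => Subtype.ext (hfaithful e he)
    exact exists_fixedSubgroup_chain_cons hlt hzero hlast hanti hmono

/-- If an elementary abelian `p`-group `E` of order `p ^ n` acts faithfully
on a finite nilpotent `p'`-group `Q`, then there is a strictly decreasing chain
`E = E_0 > E_1 > ... > E_n = 1` of subgroups of `E` whose fixed-point subgroups form a
strictly increasing chain `C_Q(E_0) < C_Q(E_1) < ... < C_Q(E_n)`. -/
theorem khukhro_lemma (p n : ℕ) (hp : p.Prime) (E Q : Type*)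
    [CommGroup E] [Fintype E] (hcard : Fintype.card E = p ^ n)
    (hexp : ∀ x : E, x ^ p = 1)
    [Group Q] [Fintype Q] (hnilp : Group.IsNilpotent Q)
    (hcop : Nat.Coprime (Fintype.card Q) p)
    [MulDistribMulAction E Q]
    (hfaithful : ∀ e : E, (∀ q : Q, e • q = q) → e = 1) :
    ∃ c : Fin (n + 1) → Subgroup E,
      c 0 = ⊤ ∧ c (Fin.last n) = ⊥ ∧ StrictAnti c ∧
      StrictMono (fun i => fixedSubgroup (c i) : Fin (n + 1) → Subgroup Q) :=
  khukhro_lemma_general hp (Nat.card_eq_fintype_card.trans hcard) hexp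
    (Nat.Coprime.pow_left_bijective (G := Q) (by rwa [Nat.card_eq_fintype_card])).injective
    hfaithful
end

section
/- Let G be a finite group with subgroups H and K such that every element of H commutes with every element of K and G is generated by H and K (i.e. G is an internal central product of H and K). If the c-dimension of H is at least m and the c-dimension of K is at least l, then the c-dimension of G is at least m + l. -/
/-!
If `A ⊆ H` and `B ⊆ K`, then `C_G(A ∪ B) ∩ H = C_H(A)` because `H` commutes with `B`, and likewise
`C_G(A ∪ B) ∩ K = C_K(B)`; so `C_G(A ∪ B)` determines the pair `(C_H(A), C_K(B))`. Replacing each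
`A` and `B` by its double centralizer leaves these centralizers unchanged and makes the sets
decrease along a chain of pairs, so that the subgroups `C_G(A ∪ B)` increase along it. Climbing
first the chain of `H` and then that of `K` gives a chain of pairs of length `m + l`.
-/

section Centralizer

variable {G H K : Type*} [Group G] [Group H] [Group K]

theorem centralizer_centralizer_centralizer_eq (s : Set G) :
    Subgroup.centralizer (Subgroup.centralizer (Subgroup.centralizer s : Set G) : Set G) =
      Subgroup.centralizer s :=
  SetLike.coe_injective s.centralizer_centralizer_centralizer

theorem comap_centralizer_image {f : H →* G} (hf : Function.Injective f) (s : Set H) :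
    (Subgroup.centralizer (f '' s)).comap f = Subgroup.centralizer s := by
  ext x
  simp only [Subgroup.mem_comap, Subgroup.mem_centralizer_iff, Set.forall_mem_image, ← map_mul,
    hf.eq_iff]

theorem comap_centralizer_image_union {f : H →* G} (hf : Function.Injective f) (s : Set H)
    {t : Set G} (ht : ∀ x, f x ∈ Subgroup.centralizer t) :
    (Subgroup.centralizer (f '' s ∪ t)).comap f = Subgroup.centralizer s := by
  have hinf : Subgroup.centralizer (f '' s ∪ t) =
      Subgroup.centralizer (f '' s) ⊓ Subgroup.centralizer t :=
    SetLike.coe_injective Set.centralizer_union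
  rw [hinf, Subgroup.comap_inf, comap_centralizer_image hf]
  exact inf_eq_left.mpr fun x _ => ht x

theorem exists_strictMono_centralizer_of_prod {f : H →* G} {g : K →* G}
    (hf : Function.Injective f) (hg : Function.Injective g) (hfg : ∀ x y, Commute (f x) (g y))
    {ι : Type*} [PartialOrder ι] {A : ι → Set H} {B : ι → Set K}
    (hAB : StrictMono fun i => (Subgroup.centralizer (A i), Subgroup.centralizer (B i))) :
    ∃ S : ι → Set G, StrictMono fun i => Subgroup.centralizer (S i) := by
  let A' (i : ι) : Set H := Subgroup.centralizer (Subgroup.centralizer (A i) : Set H)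
  let B' (i : ι) : Set K := Subgroup.centralizer (Subgroup.centralizer (B i) : Set K)
  let S (i : ι) : Set G := f '' A' i ∪ g '' B' i
  have hS_anti : Antitone S := fun i j hij =>
    Set.union_subset_union
      (Set.image_mono (Subgroup.centralizer_le (hAB.monotone hij).1))
      (Set.image_mono (Subgroup.centralizer_le (hAB.monotone hij).2))
  have hS_comap_f (i : ι) :
      (Subgroup.centralizer (S i)).comap f = Subgroup.centralizer (A i) :=
    (comap_centralizer_image_union hf (A' i) fun x =>
      Set.forall_mem_image.mpr fun y _ => (hfg x y).symm).trans
      (centralizer_centralizer_centralizer_eq (A i))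
  have hS_comap_g (i : ι) :
      (Subgroup.centralizer (S i)).comap g = Subgroup.centralizer (B i) := by
    rw [show S i = g '' B' i ∪ f '' A' i from Set.union_comm _ _]
    exact (comap_centralizer_image_union hg (B' i) fun y =>
      Set.forall_mem_image.mpr fun x _ => hfg x y).trans
      (centralizer_centralizer_centralizer_eq (B i))
  refine ⟨S, fun i j hij => (Subgroup.centralizer_le (hS_anti hij.le)).lt_of_not_ge fun hji => ?_⟩
  refine (hAB hij).not_ge ⟨?_, ?_⟩
  · simpa only [hS_comap_f] using Subgroup.comap_mono (f := f) hji
  · simpa only [hS_comap_g] using Subgroup.comap_mono (f := g) hji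

end Centralizer

theorem exists_strictMono_fin_prod (m l : ℕ) :
    ∃ p : Fin (m + l + 1) → Fin (m + 1) × Fin (l + 1), StrictMono p := by
  -- In `i - m` truncation keeps the second coordinate at `0` while the first one climbs to `m`.
  refine ⟨fun i => (⟨min i m, by lia⟩, ⟨i - m, by lia⟩), fun i j hij => ?_⟩
  simp only [Prod.mk_lt_mk, Fin.mk_lt_mk, Fin.mk_le_mk]
  lia

theorem cdim_ge_of_central_product_general {G : Type*} [Group G] (H K : Subgroup G)
    (hcomm : ∀ h ∈ H, ∀ k ∈ K, Commute h k) (m l : ℕ)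
    (hH : ∃ S : Fin (m + 1) → Set H,
      StrictMono (fun i => Subgroup.centralizer (S i) : Fin (m + 1) → Subgroup H))
    (hK : ∃ S : Fin (l + 1) → Set K,
      StrictMono (fun i => Subgroup.centralizer (S i) : Fin (l + 1) → Subgroup K)) :
    ∃ S : Fin (m + l + 1) → Set G,
      StrictMono (fun i => Subgroup.centralizer (S i) : Fin (m + l + 1) → Subgroup G) := by
  obtain ⟨A, hA⟩ := hH
  obtain ⟨B, hB⟩ := hK
  obtain ⟨p, hp⟩ := exists_strictMono_fin_prod m l
  exact exists_strictMono_centralizer_of_prod H.subtype_injective K.subtype_injective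
    (fun h k => hcomm h h.2 k k.2) ((hA.prodMap hB).comp hp)

/-- If a finite group `G` is an internal central product of subgroups `H`
and `K` (elementwise commuting, generating `G`), and the c-dimension of `H` is at least
`m` (there is a strictly increasing chain of centralizers in `H` of length `m`) and the
c-dimension of `K` is at least `l`, then the c-dimension of `G` is at least `m + l`. -/
theorem cdim_ge_of_central_product (G : Type*) [Group G] [Fintype G]
    (H K : Subgroup G)
    (hcomm : ∀ h ∈ H, ∀ k ∈ K, Commute h k) (hgen : H ⊔ K = ⊤) (m l : ℕ)
    (hH : ∃ S : Fin (m + 1) → Set H,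
      StrictMono (fun i => Subgroup.centralizer (S i) : Fin (m + 1) → Subgroup H))
    (hK : ∃ S : Fin (l + 1) → Set K,
      StrictMono (fun i => Subgroup.centralizer (S i) : Fin (l + 1) → Subgroup K)) :
    ∃ S : Fin (m + l + 1) → Set G,
      StrictMono (fun i => Subgroup.centralizer (S i) : Fin (m + l + 1) → Subgroup G) :=
  cdim_ge_of_central_product_general H K hcomm m l hH hK
end

section
/- Let S_1, S_2, ..., S_r be finite simple groups. Then the minimal faithful permutation degree of their direct product equals the sum of their minimal faithful permutation degrees: μ(S_1 × S_2 × ... × S_r) = μ(S_1) + μ(S_2) + ... + μ(S_r). -/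
/-- The minimal faithful permutation degree of a group `G`: the least `n` such that
there is an injective homomorphism from `G` into the symmetric group on `n` letters. -/
noncomputable def minPermDeg (G : Type*) [Group G] : ℕ :=
  sInf {n : ℕ | ∃ f : G →* Equiv.Perm (Fin n), Function.Injective f}

/-!
Subadditivity comes from letting the factors act on a disjoint union. For the converse, split off
one simple factor `S` at a time. Let `S × R` act faithfully on `X`, where `R` is a product of simple
groups, and choose a point whose stabilizer `H` does not contain `S × 1`. Restrict the action to a
copy of `R` and replace the orbit of this point by at most one transitive `R`-set, so that the
degree drops by at least `μ(S)` while the action of `R` remains faithful. Let `P` and `M` be the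
projections of `H` to `S` and `R`.

* If `P ≠ S`, then `|S × R : H| = |S : P| |R : H ∩ R|`, and `R ⧸ (H ∩ R)` will do.
* If `P = S`, then `H ∩ S` is normal in `S`, hence trivial, so that `H` is the graph of a surjection
  `φ : M → S`, and `|S × R : H| = |S| |R : M|`. For `S` nonabelian choose `1 < Q < S`; then
  `R ⧸ φ⁻¹(Q)` will do, since `Q` contains no nontrivial normal subgroup of `S`.
* If `P = S` is abelian, extend the restriction of `φ` to the core of `M` to a homomorphism
  `α : R → S`, which is possible because normal subgroups of `R` are direct factors. Now take the
  graph of `α`, rather than `1 × R`, as the copy of `R`; then `R ⧸ M` will do.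
-/

open MonoidHom MulAction Function

/-! ### Faithful actions and their degrees -/

section Degree

variable {G H X : Type*} [Group G] [Group H]

lemma minPermDeg_le_card [Finite X] (f : G →* Equiv.Perm X) (hf : Injective f) :
    minPermDeg G ≤ Nat.card X :=
  Nat.sInf_le ⟨(Finite.equivFin X).permCongrHom.toMonoidHom.comp f,
    (Finite.equivFin X).permCongrHom.injective.comp hf⟩

lemma minPermDeg_le_card_self [Finite G] : minPermDeg G ≤ Nat.card G :=
  minPermDeg_le_card (toPermHom G G) toPerm_injective

lemma minPermDeg_eq_zero_of_subsingleton [Subsingleton G] : minPermDeg G = 0 := by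
  simpa using minPermDeg_le_card (1 : G →* Equiv.Perm Empty) (injective_of_subsingleton _)

lemma exists_faithfulSMul_fin_minPermDeg (G : Type*) [Group G] [Finite G] :
    ∃ _ : MulAction G (Fin (minPermDeg G)), FaithfulSMul G (Fin (minPermDeg G)) := by
  obtain ⟨f, hf⟩ : ∃ f : G →* Equiv.Perm (Fin (minPermDeg G)), Injective f :=
    Nat.sInf_mem (s := {n : ℕ | ∃ f : G →* Equiv.Perm (Fin n), Injective f})
      ⟨Nat.card G, (Finite.equivFin G).permCongrHom.toMonoidHom.comp (toPermHom G G),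
        (Finite.equivFin G).permCongrHom.injective.comp toPerm_injective⟩
  let _ := MulAction.compHom (Fin (minPermDeg G)) f
  exact ⟨inferInstance, ⟨fun h => hf (Equiv.ext h)⟩⟩

lemma minPermDeg_congr (e : G ≃* H) : minPermDeg G = minPermDeg H := by
  refine congrArg sInf (Set.ext fun n => ⟨fun ⟨f, hf⟩ => ?_, fun ⟨f, hf⟩ => ?_⟩)
  · exact ⟨f.comp e.symm.toMonoidHom, hf.comp e.symm.injective⟩
  · exact ⟨f.comp e.toMonoidHom, hf.comp e.injective⟩

lemma minPermDeg_prod_le (G H : Type*) [Group G] [Group H] [Finite G] [Finite H] :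
    minPermDeg (G × H) ≤ minPermDeg G + minPermDeg H := by
  obtain ⟨_, _⟩ := exists_faithfulSMul_fin_minPermDeg G
  obtain ⟨_, _⟩ := exists_faithfulSMul_fin_minPermDeg H
  let f := (toPermHom G (Fin (minPermDeg G))).prodMap (toPermHom H (Fin (minPermDeg H)))
  have hf : Injective f := toPerm_injective.prodMap toPerm_injective
  simpa using minPermDeg_le_card ((Equiv.Perm.sumCongrHom _ _).comp f)
    (Equiv.Perm.sumCongrHom_injective.comp hf)

lemma minPermDeg_le_index {P : Subgroup G} [P.FiniteIndex] (hP : P.normalCore = ⊥) :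
    minPermDeg G ≤ P.index :=
  minPermDeg_le_card (toPermHom G (G ⧸ P))
    ((ker_eq_bot_iff _).1 (P.normalCore_eq_ker.symm.trans hP))

lemma normalCore_eq_bot_of_ne_top [IsSimpleGroup G] {P : Subgroup G} (hP : P ≠ ⊤) :
    P.normalCore = ⊥ :=
  P.normalCore_normal.eq_bot_or_eq_top.resolve_right fun h =>
    hP (top_le_iff.1 (h.ge.trans P.normalCore_le))

lemma exists_subgroup_ne_bot_ne_top_of_not_isMulCommutative (hG : ¬ IsMulCommutative G) :
    ∃ Q : Subgroup G, Q ≠ ⊥ ∧ Q ≠ ⊤ := by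
  rw [isMulCommutative_iff] at hG
  push Not at hG
  obtain ⟨a, b, hab⟩ := hG
  refine ⟨Subgroup.zpowers a, ?_, fun h => ?_⟩
  · rw [Subgroup.zpowers_ne_bot]
    rintro rfl
    simp at hab
  · obtain ⟨n, rfl⟩ : b ∈ Subgroup.zpowers a := h ▸ Subgroup.mem_top b
    exact hab ((Commute.refl a).zpow_right n)

end Degree

/-! ### Subgroups of a product of two groups -/

section Prod

lemma relIndex_sup_right_eq {G : Type*} [Group G] (H K : Subgroup G) [K.Normal] :
    H.relIndex (H ⊔ K) = H.relIndex K := by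
  let f := Subgroup.quotientSubgroupOfEmbeddingOfLE H (le_sup_right : K ≤ H ⊔ K)
  have hf : Surjective f := by
    rintro ⟨g, hg⟩
    rw [sup_comm, ← SetLike.mem_coe, Subgroup.normal_mul] at hg
    obtain ⟨k, hk, h, hh, rfl⟩ := hg
    refine ⟨QuotientGroup.mk ⟨k, hk⟩, QuotientGroup.eq.2 ?_⟩
    simpa [Subgroup.mem_subgroupOf] using hh
  exact (Nat.card_congr (Equiv.ofBijective f ⟨f.injective, hf⟩)).symm

lemma index_eq_index_map_mul_relIndex_ker {G Q : Type*} [Group G] [Group Q] {f : G →* Q}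
    (hf : Surjective f) (H : Subgroup G) :
    H.index = (H.map f).index * H.relIndex f.ker := by
  rw [Subgroup.index_map, f.range_eq_top_of_surjective hf, Subgroup.index_top, mul_one,
    ← relIndex_sup_right_eq, mul_comm, Subgroup.relIndex_mul_index le_sup_left]

variable {S R : Type*} [Group S] [Group R]

lemma index_eq_index_map_fst_mul (H : Subgroup (S × R)) :
    H.index = (H.map (fst S R)).index * (H.comap (inr S R)).index := by
  have hker : (fst S R).ker = (inr S R).range := by
    ext ⟨s, r⟩
    simp [Subgroup.mem_prod, eq_comm]
  rw [index_eq_index_map_mul_relIndex_ker (f := fst S R) Prod.fst_surjective, hker,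
    Subgroup.index_comap]

lemma index_eq_index_map_snd_mul (H : Subgroup (S × R)) :
    H.index = (H.map (snd S R)).index * (H.comap (inl S R)).index := by
  have hker : (snd S R).ker = (inl S R).range := by
    ext ⟨s, r⟩
    simp [Subgroup.mem_prod, eq_comm]
  rw [index_eq_index_map_mul_relIndex_ker (f := snd S R) Prod.snd_surjective, hker,
    Subgroup.index_comap]

lemma normalCore_comap_inr_le (H : Subgroup (S × R)) :
    (H.comap (inr S R)).normalCore ≤ H.normalCore.comap (inr S R) := by
  rintro r hr ⟨s, a⟩
  simpa using (hr a : ((1 : S), a * r * a⁻¹) ∈ H)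

lemma normal_comap_inl_of_map_fst_eq_top {H : Subgroup (S × R)} (hH : H.map (fst S R) = ⊤) :
    (H.comap (inl S R)).Normal := by
  refine ⟨fun l hl s => ?_⟩
  obtain ⟨⟨s, r⟩, hsr, rfl⟩ : s ∈ H.map (fst S R) := hH ▸ Subgroup.mem_top s
  simpa using H.mul_mem (H.mul_mem hsr hl) (H.inv_mem hsr)

lemma exists_graph_hom_of_comap_inl_eq_bot {H : Subgroup (S × R)} (hH : H.comap (inl S R) = ⊥) :
    ∃ φ : H.map (snd S R) →* S, ∀ s (m : H.map (snd S R)), (s, (m : R)) ∈ H ↔ φ m = s := by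
  have hunique {s s' : S} {r : R} (h : (s, r) ∈ H) (h' : (s', r) ∈ H) : s = s' := by
    have : s * s'⁻¹ ∈ H.comap (inl S R) := by simpa using H.mul_mem h (H.inv_mem h')
    rwa [hH, Subgroup.mem_bot, mul_inv_eq_one] at this
  have hexists (m : H.map (snd S R)) : ∃ s : S, (s, (m : R)) ∈ H := by
    obtain ⟨_, ⟨s, m⟩, hsm, rfl⟩ := m
    exact ⟨s, hsm⟩
  choose φ hφ using hexists
  refine ⟨⟨⟨φ, hunique (hφ 1) H.one_mem⟩, fun a b => hunique (hφ _) (H.mul_mem (hφ a) (hφ b))⟩,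
    fun s m => ⟨hunique (hφ m), ?_⟩⟩
  rintro rfl
  exact hφ m

end Prod

/-! ### Completely reducible groups -/

/-- A group is completely reducible if each of its normal subgroups is a direct factor. This is
expressed by a retraction onto the normal subgroup, whose kernel is the complementary factor. -/
def IsCompletelyReducible (G : Type*) [Group G] : Prop :=
  ∀ N : Subgroup G, N.Normal → ∃ ρ : G →* N, ∀ n : N, ρ n = n

namespace IsCompletelyReducible

variable {A B : Type*} [Group A] [Group B]

lemma of_subsingleton [Subsingleton A] : IsCompletelyReducible A :=
  fun _ _ => ⟨1, fun _ => Subsingleton.elim _ _⟩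

lemma of_isSimpleGroup [IsSimpleGroup A] : IsCompletelyReducible A := by
  intro N hN
  rcases hN.eq_bot_or_eq_top with rfl | rfl
  · exact ⟨1, fun _ => Subsingleton.elim _ _⟩
  · exact ⟨Subgroup.topEquiv.symm.toMonoidHom, fun _ => rfl⟩

lemma congr (e : A ≃* B) (hA : IsCompletelyReducible A) : IsCompletelyReducible B := by
  intro N hN
  obtain ⟨ρ, hρ⟩ := hA (N.comap e.toMonoidHom) (hN.comap _)
  refine ⟨(e.toMonoidHom.subgroupComap N).comp (ρ.comp e.symm.toMonoidHom), fun n => ?_⟩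
  have hn : (ρ (e.symm n) : A) = e.symm n := congrArg Subtype.val (hρ ⟨e.symm n, by simp⟩)
  exact Subtype.ext ((congrArg e hn).trans (e.apply_symm_apply n))

/-- Modulo `N ∩ A`, which has a normal complement in `A`, the normal subgroup `N` is the graph of a
homomorphism `N₂ → A` defined on its projection `N₂` to `B`. -/
lemma prod (hA : IsCompletelyReducible A) (hB : IsCompletelyReducible B) :
    IsCompletelyReducible (A × B) := by
  intro N hN
  have hN₁ := hN.comap (inl A B)
  obtain ⟨ρ₁, hρ₁⟩ := hA _ hN₁
  obtain ⟨ρ₂, hρ₂⟩ := hB (N.map (snd A B)) (hN.map _ Prod.snd_surjective)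
  have hdisj : Disjoint (N.comap (inl A B)) ρ₁.ker := by
    rw [Subgroup.disjoint_def]
    intro a ha hker
    simpa using congrArg Subtype.val ((hρ₁ ⟨a, ha⟩).symm.trans hker)
  let K : Subgroup (A × B) := N ⊓ ρ₁.ker.comap (fst A B)
  have hK_inl : K.comap (inl A B) = ⊥ := hdisj.eq_bot
  have hsplit {a : A} {b : B} (h : (a, b) ∈ N) : ((ρ₁ a : A)⁻¹ * a, b) ∈ K := by
    refine ⟨?_, ?_⟩
    · simpa using N.mul_mem (N.inv_mem (ρ₁ a).2) h
    · simp [mem_ker, hρ₁]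
  have hK_snd : N.map (snd A B) ≤ K.map (snd A B) := by
    rintro _ ⟨⟨a, b⟩, h, rfl⟩
    exact ⟨_, hsplit h, rfl⟩
  obtain ⟨φ, hφ⟩ := exists_graph_hom_of_comap_inl_eq_bot hK_inl
  let ψ : B →* A := φ.comp ((Subgroup.inclusion hK_snd).comp ρ₂)
  have hψ (b : B) : (ψ b, (ρ₂ b : B)) ∈ K := (hφ _ (Subgroup.inclusion hK_snd (ρ₂ b))).2 rfl
  let f : A →* A × B := (inl A B).comp ((Subgroup.subtype _).comp ρ₁)
  let g : B →* A × B := ψ.prod ((Subgroup.subtype _).comp ρ₂)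
  have hcomm (a : A) (b : B) : Commute (f a) (g b) :=
    Prod.commute_iff.2 ⟨Subgroup.commute_of_normal_of_disjoint _ _ hN₁ inferInstance hdisj _ _
      (ρ₁ a).2 (hψ b).2, Commute.one_left _⟩
  refine ⟨(f.noncommCoprod g hcomm).codRestrict N fun x => N.mul_mem (ρ₁ x.1).2 (hψ x.2).1, ?_⟩
  rintro ⟨⟨a, b⟩, h⟩
  have hb : ρ₂ b = ⟨b, (a, b), h, rfl⟩ := hρ₂ ⟨b, (a, b), h, rfl⟩
  have hψb : ψ b = (ρ₁ a : A)⁻¹ * a :=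
    (hφ _ (Subgroup.inclusion hK_snd (ρ₂ b))).1 (by simpa [hb] using hsplit h)
  refine Subtype.ext (Prod.ext ?_ ?_)
  · change (ρ₁ a : A) * ψ b = a
    rw [hψb, mul_inv_cancel_left]
  · change 1 * (ρ₂ b : B) = b
    rw [one_mul, hb]

end IsCompletelyReducible

/-! ### Trading an orbit -/

section Orbit

variable {G K : Type*} [Group G] [Group K]

lemma minPermDeg_add_index_stabilizer_le {X Y : Type*} [MulAction G X] [FaithfulSMul G X]
    [Finite X] [Finite Y] (x : X) {j : K →* G} (hj : Injective j) (σ : K →* Equiv.Perm Y)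
    (hσ : σ.ker ≤ (stabilizer G x).normalCore.comap j) :
    minPermDeg K + (stabilizer G x).index ≤ Nat.card X + Nat.card Y := by
  let C : SubMulAction G X := { carrier := (orbit G x)ᶜ, smul_mem' := by simp [← orbit_eq_iff] }
  let τ : K →* Equiv.Perm (C ⊕ Y) :=
    (Equiv.Perm.sumCongrHom C Y).comp (((toPermHom G C).comp j).prod σ)
  have hτ : Injective τ := by
    refine Equiv.Perm.sumCongrHom_injective.comp ((injective_iff_map_eq_one _).2 fun k hk => ?_)
    obtain ⟨hC, hY⟩ := Prod.ext_iff.1 hk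
    refine (map_eq_one_iff j hj).1 (eq_of_smul_eq_smul (α := X) fun y => ?_)
    rw [one_smul]
    by_cases hy : y ∈ orbit G x
    · obtain ⟨g, rfl⟩ := hy
      have hfix : g⁻¹ * j k * g⁻¹⁻¹ ∈ stabilizer G x := hσ hY g⁻¹
      rwa [inv_inv, mem_stabilizer_iff, mul_smul, mul_smul, inv_smul_eq_iff] at hfix
    · exact congrArg Subtype.val (Equiv.congr_fun hC (⟨y, hy⟩ : C))
  have hcard : (orbit G x).ncard + Nat.card C = Nat.card X := Set.ncard_add_ncard_compl _
  have hle := minPermDeg_le_card τ hτ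
  rw [Nat.card_sum] at hle
  rw [index_stabilizer]
  lia

/-- In a faithful `G`-set, an orbit with point stabilizer `H` can be traded for an orbit of `K`
with point stabilizer `M`, or for no orbit at all if `M = ⊤`, so that at least `n` points are saved
and `K`, embedded in `G` by a suitable `j`, still acts faithfully. -/
def CanTradeOrbit (K : Type*) [Group K] (H : Subgroup G) (n : ℕ) : Prop :=
  ∃ (j : K →* G) (M : Subgroup K), Injective j ∧ M.normalCore ≤ H.normalCore.comap j ∧
    n ≤ H.index ∧ (M ≠ ⊤ → M.index + n ≤ H.index)

lemma CanTradeOrbit.minPermDeg_add_le_card {X : Type*} [MulAction G X] [FaithfulSMul G X]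
    [Finite X] [Finite K] {x : X} {n : ℕ} (h : CanTradeOrbit K (stabilizer G x) n) :
    minPermDeg K + n ≤ Nat.card X := by
  obtain ⟨j, M, hj, hM, hn, hMn⟩ := h
  rcases eq_or_ne M ⊤ with rfl | hMtop
  · rw [Subgroup.normalCore_eq_self] at hM
    have hle :=
      minPermDeg_add_index_stabilizer_le x hj (1 : K →* Equiv.Perm Empty) (le_top.trans hM)
    rw [Nat.card_of_isEmpty (α := Empty)] at hle
    lia
  · rw [Subgroup.normalCore_eq_ker] at hM
    have hle := minPermDeg_add_index_stabilizer_le x hj (toPermHom K (K ⧸ M)) hM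
    have hdrop := hMn hMtop
    rw [← M.index_eq_card] at hle
    lia

lemma canTradeOrbit_of_index_eq_mul {H : Subgroup G} {j : K →* G} (hj : Injective j)
    {M : Subgroup K} [M.FiniteIndex] (hM : M.normalCore ≤ H.normalCore.comap j) {a n : ℕ}
    (hidx : H.index = a * M.index) (ha : 1 < a) (hn : n ≤ a) : CanTradeOrbit K H n := by
  have hpos : 0 < M.index := Nat.pos_of_ne_zero Subgroup.FiniteIndex.index_ne_zero
  refine ⟨j, M, hj, hM, ?_, fun hMtop => ?_⟩
  · rw [hidx]
    exact hn.trans (Nat.le_mul_of_pos_right a hpos)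
  · have hone := Subgroup.one_lt_index_of_ne_top hMtop
    rw [hidx]
    nlinarith

end Orbit

section SimpleFactor

variable {S R : Type*} [Group S] [Group R] [Finite S] [Finite R] {H : Subgroup (S × R)} {n : ℕ}

lemma canTradeOrbit_of_map_fst_ne_top (hH : H.map (fst S R) ≠ ⊤)
    (hn : n ≤ (H.map (fst S R)).index) : CanTradeOrbit R H n :=
  canTradeOrbit_of_index_eq_mul (Prod.mk_right_injective 1) (normalCore_comap_inr_le H)
    (index_eq_index_map_fst_mul H) (Subgroup.one_lt_index_of_ne_top hH) hn

lemma canTradeOrbit_of_normalCore_eq_bot (hinl : H.comap (inl S R) = ⊥)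
    (hfst : H.map (fst S R) = ⊤) {Q : Subgroup S} (hQ : Q ≠ ⊥) (hcore : Q.normalCore = ⊥)
    (hn : n ≤ Q.index) : CanTradeOrbit R H n := by
  obtain ⟨φ, hφ⟩ := exists_graph_hom_of_comap_inl_eq_bot hinl
  have hφsurj : Surjective φ := by
    intro s
    obtain ⟨⟨s, r⟩, hsr, rfl⟩ : s ∈ H.map (fst S R) := hfst ▸ Subgroup.mem_top s
    exact ⟨⟨r, (s, r), hsr, rfl⟩, (hφ _ _).1 hsr⟩
  let M : Subgroup R := (Q.comap φ).map (Subgroup.subtype _)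
  have hMidx : M.index = Q.index * (H.map (snd S R)).index := by
    rw [Subgroup.index_map_subtype, Subgroup.index_comap_of_surjective _ hφsurj]
  have hHidx : H.index = Nat.card Q * M.index := by
    rw [index_eq_index_map_snd_mul, hinl, Subgroup.index_bot, ← Q.card_mul_index, hMidx]
    ring
  have hker : M.normalCore.subgroupOf (H.map (snd S R)) ≤ φ.ker := by
    have hnormal := (M.normalCore_normal.subgroupOf (H.map (snd S R))).map φ hφsurj
    have hle : (M.normalCore.subgroupOf (H.map (snd S R))).map φ ≤ Q := by
      rintro _ ⟨m, hm, rfl⟩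
      obtain ⟨m', hm', hmm'⟩ := M.normalCore_le hm
      rwa [← Subtype.ext hmm']
    rwa [← Subgroup.normal_le_normalCore, hcore, le_bot_iff, Subgroup.map_eq_bot_iff] at hle
  have hMcore : M.normalCore ≤ H.comap (inr S R) := by
    intro r hr
    obtain ⟨m, -, rfl⟩ := M.normalCore_le hr
    exact (hφ 1 m).2 (hker hr)
  have hnM : n ≤ M.index := by
    rw [hMidx]
    exact hn.trans (Nat.le_mul_of_pos_right _ (Nat.pos_of_ne_zero Subgroup.index_ne_zero_of_finite))
  have hdrop : M.index + n ≤ H.index := by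
    have hcard := Q.one_lt_card_iff_ne_bot.2 hQ
    rw [hHidx]
    nlinarith
  exact ⟨inr S R, M, Prod.mk_right_injective 1,
    (Subgroup.normal_le_normalCore.2 hMcore).trans (normalCore_comap_inr_le H),
    le_of_add_le_right hdrop, fun _ => hdrop⟩

lemma canTradeOrbit_of_isMulCommutative [IsMulCommutative S] [Nontrivial S]
    (hR : IsCompletelyReducible R) (hinl : H.comap (inl S R) = ⊥) (hn : n ≤ Nat.card S) :
    CanTradeOrbit R H n := by
  obtain ⟨φ, hφ⟩ := exists_graph_hom_of_comap_inl_eq_bot hinl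
  let M := H.map (snd S R)
  obtain ⟨ρ, hρ⟩ := hR M.normalCore M.normalCore_normal
  let α : R →* S := φ.comp ((Subgroup.inclusion M.normalCore_le).comp ρ)
  have hα {r : R} (hr : r ∈ M.normalCore) : (α r, r) ∈ H := by
    have hρr : ρ r = ⟨r, hr⟩ := hρ ⟨r, hr⟩
    exact (hφ _ ⟨r, M.normalCore_le hr⟩).2 (by simp [α, hρr, Subgroup.inclusion])
  have hcore : M.normalCore ≤ H.normalCore.comap (α.prod (MonoidHom.id R)) := by
    rintro r hr ⟨s, a⟩
    have hconj : s * α r * s⁻¹ = α (a * r * a⁻¹) := by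
      simp [mul_comm' s, mul_comm' (α a)]
    simpa [← hconj] using hα (M.normalCore_normal.conj_mem r hr a)
  have hidx : H.index = Nat.card S * M.index := by
    rw [index_eq_index_map_snd_mul, hinl, Subgroup.index_bot, mul_comm]
  exact canTradeOrbit_of_index_eq_mul (fun _ _ h => congrArg Prod.snd h) hcore hidx
    Finite.one_lt_card hn

lemma canTradeOrbit_minPermDeg [IsSimpleGroup S] (hR : IsCompletelyReducible R)
    (hH : H.comap (inl S R) ≠ ⊤) : CanTradeOrbit R H (minPermDeg S) := by
  by_cases hfst : H.map (fst S R) = ⊤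
  · have hinl : H.comap (inl S R) = ⊥ :=
      (normal_comap_inl_of_map_fst_eq_top hfst).eq_bot_or_eq_top.resolve_right hH
    by_cases hS : IsMulCommutative S
    · exact canTradeOrbit_of_isMulCommutative hR hinl minPermDeg_le_card_self
    · obtain ⟨Q, hQbot, hQtop⟩ := exists_subgroup_ne_bot_ne_top_of_not_isMulCommutative hS
      have hcore := normalCore_eq_bot_of_ne_top hQtop
      exact canTradeOrbit_of_normalCore_eq_bot hinl hfst hQbot hcore (minPermDeg_le_index hcore)
  · exact canTradeOrbit_of_map_fst_ne_top hfst
      (minPermDeg_le_index (normalCore_eq_bot_of_ne_top hfst))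

end SimpleFactor

theorem minPermDeg_prod_of_isSimpleGroup {S R : Type*} [Group S] [Group R] [Finite S] [Finite R]
    [IsSimpleGroup S] (hR : IsCompletelyReducible R) :
    minPermDeg (S × R) = minPermDeg S + minPermDeg R := by
  refine le_antisymm (minPermDeg_prod_le S R) ?_
  obtain ⟨_, _⟩ := exists_faithfulSMul_fin_minPermDeg (S × R)
  obtain ⟨s, hs⟩ := exists_ne (1 : S)
  obtain ⟨x, hx⟩ : ∃ x : Fin (minPermDeg (S × R)), inl S R s • x ≠ x := by
    by_contra! hfix
    have : inl S R s = 1 := eq_of_smul_eq_smul fun x => (hfix x).trans (one_smul _ x).symm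
    exact hs (congrArg Prod.fst this)
  have hH : (stabilizer (S × R) x).comap (inl S R) ≠ ⊤ := fun h =>
    hx (h.ge (Subgroup.mem_top s))
  simpa [add_comm] using (canTradeOrbit_minPermDeg hR hH).minPermDeg_add_le_card

/-! ### Finite families of groups -/

universe u v

/-- `Equiv.piCongrLeft` as an isomorphism of groups. -/
def piCongrLeftMulEquiv {ι κ : Type*} (S : κ → Type*) [∀ i, Group (S i)] (e : ι ≃ κ) :
    (∀ i, S (e i)) ≃* ∀ i, S i :=
  MulEquiv.symm { Equiv.piCongrLeft' S e.symm with map_mul' := fun _ _ => rfl }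

/-- `Equiv.piOptionEquivProd` as an isomorphism of groups. -/
def piOptionMulEquivProd {ι : Type*} (S : Option ι → Type*) [∀ i, Group (S i)] :
    (∀ i, S i) ≃* S none × ∀ i, S (some i) :=
  { Equiv.piOptionEquivProd with map_mul' := fun _ _ => rfl }

theorem IsCompletelyReducible.pi {ι : Type u} [Finite ι] {S : ι → Type v} [∀ i, Group (S i)]
    (hS : ∀ i, IsCompletelyReducible (S i)) : IsCompletelyReducible (∀ i, S i) := by
  induction ι using Finite.induction_empty_option with
  | of_equiv e ih => exact (ih fun i => hS (e i)).congr (piCongrLeftMulEquiv S e)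
  | h_empty => exact of_subsingleton
  | h_option ih =>
    exact ((hS none).prod (ih fun i => hS (some i))).congr (piOptionMulEquivProd S).symm

theorem minPermDeg_pi_simple_general {ι : Type u} [Fintype ι] (S : ι → Type v) [∀ i, Group (S i)]
    [∀ i, Finite (S i)] [∀ i, IsSimpleGroup (S i)] :
    minPermDeg (∀ i, S i) = ∑ i, minPermDeg (S i) := by
  refine Fintype.induction_empty_option (P := fun ι _ => ∀ (S : ι → Type v) [∀ i, Group (S i)]
    [∀ i, Finite (S i)] [∀ i, IsSimpleGroup (S i)],
    minPermDeg (∀ i, S i) = ∑ i, minPermDeg (S i)) ?_ ?_ ?_ ι S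
  · intro ι κ _ e ih S _ _ _
    let _ : Fintype ι := Fintype.ofEquiv κ e.symm
    rw [← minPermDeg_congr (piCongrLeftMulEquiv S e), ih, e.sum_comp fun i => minPermDeg (S i)]
  · intro S _ _ _
    rw [minPermDeg_eq_zero_of_subsingleton, Fintype.sum_empty]
  · intro ι _ ih S _ _ _
    have hR : IsCompletelyReducible (∀ i, S (some i)) := .pi fun _ => .of_isSimpleGroup
    rw [minPermDeg_congr (piOptionMulEquivProd S), minPermDeg_prod_of_isSimpleGroup hR, ih,
      Fintype.sum_option]

/-- The minimal faithful permutation degree of a direct product of finite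
simple groups is the sum of their minimal faithful permutation degrees. -/
theorem minPermDeg_pi_simple (r : ℕ) (S : Fin r → Type)
    [∀ i, Group (S i)] [∀ i, Fintype (S i)] (hsimple : ∀ i, IsSimpleGroup (S i)) :
    minPermDeg (∀ i, S i) = ∑ i, minPermDeg (S i) :=
  minPermDeg_pi_simple_general S
end
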